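/- Let μ be a probability measure on a measurable space Ω, let λ > 0, let Â : Ω → ℝ be measurable and μ-integrable with ∫ Â dμ = 0, assume Z := ∫ exp(Â(x)/λ) dμ(x) is finite and positive and that x ↦ Â(x)·exp(Â(x)/λ) is μ-integrable, and let ν be the exponentially tilted measure of μ by Â with parameter λ. Let A : Ω → ℝ be measurable with sup_x |Â(x) − A(x)| ≤ ε for some ε ≥ 0. Then A is ν-integrable and ∫ A dν ≥ λ·KL(ν‖μ) − ε. -/

import Mathlib

open MeasureTheory Real

/-- Kullback–Leibler divergence `KL(ν‖μ) = ∫ log(dν/dμ) dν`. -/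
noncomputable def klDiv {Ω : Type*} [MeasurableSpace Ω] (ν μ : Measure Ω) : ℝ :=
  ∫ x, Real.log ((ν.rnDeriv μ x).toReal) ∂ν

/-! With `f = Â/λ`, the Gibbs form of the density gives
`KL(ν‖μ) = ∫ f dν - log ∫ exp f dμ`, and Jensen's inequality bounds the log-partition function
below by `∫ f dμ`, which is `0` for a centered advantage. So `λ KL(ν‖μ) ≤ ∫ Â dν`, and replacing
`Â` by `A` costs at most `ε` because `ν` is a probability measure. -/

section

variable {Ω : Type*} [MeasurableSpace Ω] {μ : Measure Ω}

theorem norm_integral_sub_integral_le_of_ae_norm_sub_le [IsProbabilityMeasure μ]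
    {E : Type*} [NormedAddCommGroup E] [NormedSpace ℝ E] {f g : Ω → E} {C : ℝ}
    (hf : Integrable f μ) (hg : Integrable g μ)
    (hfg : ∀ᵐ x ∂μ, ‖f x - g x‖ ≤ C) : ‖∫ x, f x ∂μ - ∫ x, g x ∂μ‖ ≤ C := by
  rw [← integral_sub hf hg]
  simpa using norm_integral_le_of_norm_le_const hfg

variable {f : Ω → ℝ}

theorem integral_le_log_integral_exp [IsProbabilityMeasure μ] (hf : Integrable f μ)
    (hexp : Integrable (fun x => exp (f x)) μ) :
    ∫ x, f x ∂μ ≤ log (∫ x, exp (f x) ∂μ) := by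
  rw [le_log_iff_exp_le (integral_exp_pos hexp)]
  exact convexOn_exp.map_integral_le continuous_exp.continuousOn isClosed_univ
    (.of_forall fun _ => Set.mem_univ _) hf hexp

theorem klDiv_tilted_self [SigmaFinite μ] [NeZero μ]
    (hexp : Integrable (fun x => exp (f x)) μ) (hf : Integrable f (μ.tilted f)) :
    klDiv (μ.tilted f) μ = ∫ x, f x ∂(μ.tilted f) - log (∫ x, exp (f x) ∂μ) := by
  have : IsProbabilityMeasure (μ.tilted f) := isProbabilityMeasure_tilted hexp
  calc klDiv (μ.tilted f) μ
      = ∫ x, (f x - log (∫ y, exp (f y) ∂μ)) ∂(μ.tilted f) :=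
        integral_congr_ae
          ((tilted_absolutelyContinuous μ f).ae_le (log_rnDeriv_tilted_left_self hexp))
    _ = ∫ x, f x ∂(μ.tilted f) - log (∫ x, exp (f x) ∂μ) := by
        simp [integral_sub hf (integrable_const _)]

theorem klDiv_tilted_add_integral_le [IsProbabilityMeasure μ] (hf : Integrable f μ)
    (hexp : Integrable (fun x => exp (f x)) μ) (hf_tilted : Integrable f (μ.tilted f)) :
    klDiv (μ.tilted f) μ + ∫ x, f x ∂μ ≤ ∫ x, f x ∂(μ.tilted f) := by
  rw [klDiv_tilted_self hexp hf_tilted]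
  linarith [integral_le_log_integral_exp hf hexp]

end

theorem true_advantage_lower_bound_general
    {Ω : Type*} [MeasurableSpace Ω] (μ : Measure Ω) [IsProbabilityMeasure μ]
    (lam : ℝ) (hlam : 0 < lam)
    (Ahat : Ω → ℝ) (hAhatInt : Integrable Ahat μ)
    (hZfin : Integrable (fun x => exp (Ahat x / lam)) μ)
    (hAexp : Integrable (fun x => Ahat x * exp (Ahat x / lam)) μ)
    (ν : Measure Ω) (hν : ν = μ.tilted (fun x => Ahat x / lam))
    (A : Ω → ℝ) (hA : AEStronglyMeasurable A ν)
    (ε : ℝ) (hclose : ∀ᵐ x ∂ν, |Ahat x - A x| ≤ ε) :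
    Integrable A ν ∧ lam * klDiv ν μ + ∫ x, Ahat x ∂μ - ε ≤ ∫ x, A x ∂ν := by
  subst hν
  set ν := μ.tilted (fun x => Ahat x / lam)
  have : IsProbabilityMeasure ν := isProbabilityMeasure_tilted hZfin
  have hAhat_ν : Integrable Ahat ν := by
    simpa only [ν, integrable_tilted_iff hZfin, smul_eq_mul, mul_comm] using hAexp
  have hA_ν : Integrable A ν :=
    integrable_of_norm_sub_le hA hAhat_ν (integrable_const ε) hclose
  have hKL : lam * klDiv ν μ + ∫ x, Ahat x ∂μ ≤ ∫ x, Ahat x ∂ν := by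
    have h := klDiv_tilted_add_integral_le (hAhatInt.div_const lam) hZfin (hAhat_ν.div_const lam)
    rw [integral_div, integral_div, le_div_iff₀ hlam] at h
    rwa [add_mul, div_mul_cancel₀ _ hlam.ne', mul_comm] at h
  have hbias : ∫ x, Ahat x ∂ν - ∫ x, A x ∂ν ≤ ε :=
    (le_abs_self _).trans
      (norm_integral_sub_integral_le_of_ae_norm_sub_le hAhat_ν hA_ν hclose)
  exact ⟨hA_ν, by linarith⟩

theorem true_advantage_lower_bound
    {Ω : Type*} [MeasurableSpace Ω] (μ : Measure Ω) [IsProbabilityMeasure μ]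
    (lam : ℝ) (hlam : 0 < lam)
    (Ahat : Ω → ℝ) (hAhat : Measurable Ahat)
    (hAhatInt : Integrable Ahat μ) (hAhat0 : ∫ x, Ahat x ∂μ = 0)
    (hZfin : Integrable (fun x => Real.exp (Ahat x / lam)) μ)
    (hZpos : 0 < ∫ x, Real.exp (Ahat x / lam) ∂μ)
    (hAexp : Integrable (fun x => Ahat x * Real.exp (Ahat x / lam)) μ)
    (ν : Measure Ω) (hν : ν = μ.tilted (fun x => Ahat x / lam))
    (A : Ω → ℝ) (hA : Measurable A)
    (ε : ℝ) (hε : 0 ≤ ε) (hclose : ∀ x, |Ahat x - A x| ≤ ε) :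
    Integrable A ν ∧ lam * klDiv ν μ - ε ≤ ∫ x, A x ∂ν := by
  simpa only [hAhat0, add_zero] using true_advantage_lower_bound_general μ lam hlam Ahat hAhatInt
    hZfin hAexp ν hν A hA.aestronglyMeasurable ε (.of_forall hclose)
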